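/- Fix a real number r ≥ 1 such that d_r is defined (r a positive integer). Then there is a constant A_r > 0 such that for all 2 ≤ x ≤ T, ∑_{k ≤ x} d_r(k)²/k = A_r (log x)^{r²} + O((log T)^{r²−1}), uniformly in x, where the implied constant depends only on r. -/

import Mathlib

open ArithmeticFunction Finset

/-- The `r`-fold divisor function. -/
def dFold (r : ℕ) (n : ℕ) : ℕ := (ArithmeticFunction.zeta ^ r) n

/-!
Put `κ = r ^ q`. The function `f = d_r ^ q` is multiplicative with `f p = κ` at every prime `p`, so
`h = f * μ ^ κ` (Dirichlet product) vanishes at the primes, and `∑ h n * n ^ (-s)` converges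
absolutely for `s > 1 / 2`. Since `f = h * ζ ^ κ`,
`∑ n ≤ x, f n / n = ∑ m, h m / m * ∑ n ≤ x / m, d_κ n / n`, where the inner sum is
`log x ^ κ / κ!` up to an error `O((1 + log m) * log x ^ (κ - 1))`, which the decay of `h` absorbs.
The constant `A = (∑ h m / m) / κ!` is positive because the series is a convergent product of the
positive Euler factors `(1 - 1 / p) ^ κ * ∑ k, f (p ^ k) * p ^ (-k)`.
-/

section LogarithmicSums

theorem add_one_mul_sub_mul_pow_le_pow_sub_pow {a b : ℝ} (ha : 0 ≤ a) (hb : 0 ≤ b) (N : ℕ) :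
    (N + 1) * ((a - b) * b ^ N) ≤ a ^ (N + 1) - b ^ (N + 1) := by
  have h := pow_add_mul_le_add_pow hb (show 0 ≤ 2 * b + (a - b) by linarith) (N + 1)
  rw [add_sub_cancel, Nat.add_sub_cancel, Nat.cast_succ] at h
  linarith

variable {L : ℕ → ℝ} {M : ℕ}

theorem add_one_mul_sum_range_sub_mul_pow_succ_le (hL : ∀ m ≤ M, 0 ≤ L m) (N : ℕ) :
    (N + 1) * ∑ m ∈ range M, (L m - L (m + 1)) * L (m + 1) ^ N ≤
      L 0 ^ (N + 1) - L M ^ (N + 1) := by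
  rw [mul_sum, ← sum_range_sub' (fun m ↦ L m ^ (N + 1))]
  refine sum_le_sum fun m hm ↦ ?_
  rw [mem_range] at hm
  exact add_one_mul_sub_mul_pow_le_pow_sub_pow (hL m hm.le) (hL (m + 1) hm) N

theorem pow_sub_pow_le_add_one_mul_sum_range_sub_mul_pow (hL : ∀ m ≤ M, 0 ≤ L m) (N : ℕ) :
    L 0 ^ (N + 1) - L M ^ (N + 1) ≤ (N + 1) * ∑ m ∈ range M, (L m - L (m + 1)) * L m ^ N := by
  rw [mul_sum, ← sum_range_sub' (fun m ↦ L m ^ (N + 1))]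
  refine sum_le_sum fun m hm ↦ ?_
  rw [mem_range] at hm
  have h := add_one_mul_sub_mul_pow_le_pow_sub_pow (hL (m + 1) hm) (hL m hm.le) N
  linarith

theorem sum_Icc_one_eq_sum_range_add_one (f : ℕ → ℝ) (M : ℕ) :
    ∑ m ∈ Icc 1 M, f m = ∑ m ∈ range M, f (m + 1) := by
  rw [range_eq_Ico, sum_Ico_add', zero_add, Ico_add_one_right_eq_Icc]

theorem harmonic_succ_sub_harmonic (m : ℕ) :
    (harmonic (m + 1) : ℝ) - harmonic m = ((m + 1 : ℕ) : ℝ)⁻¹ := by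
  rw [harmonic_succ, Rat.cast_add, add_sub_cancel_left, Rat.cast_inv, Rat.cast_natCast]

theorem harmonic_cast_mono : Monotone fun m ↦ (harmonic m : ℝ) :=
  monotone_nat_of_le_succ fun m ↦ sub_nonneg.1 <| by
    rw [harmonic_succ_sub_harmonic]
    positivity

theorem one_le_div_natCast_of_mem {y : ℝ} {m : ℕ} (hm : m ∈ Icc 1 ⌊y⌋₊) : 1 ≤ y / m := by
  obtain ⟨h1, hmy⟩ := mem_Icc.1 hm
  have hm0 : (0 : ℝ) < m := by exact_mod_cast h1
  rw [one_le_div hm0]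
  exact (Nat.le_floor_iff' (Nat.one_le_iff_ne_zero.1 h1)).1 hmy

/-- Summing against the harmonic numbers `H m` instead of `log m` makes the sum telescope: `m⁻¹` is
exactly `H m - H (m - 1)`, and `log m ≤ H (m - 1)`. -/
theorem log_pow_succ_le_sum_inv_mul_log_div_pow {y : ℝ} (hy : 1 ≤ y) (N : ℕ) :
    Real.log y ^ (N + 1) / (N + 1) ≤
      ∑ m ∈ Icc 1 ⌊y⌋₊, (m : ℝ)⁻¹ * Real.log (y / m) ^ N := by
  let L (m : ℕ) : ℝ := max (Real.log y - harmonic m) 0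
  have hL0 : L 0 = Real.log y := by simp [L, Real.log_nonneg hy]
  have hLM : L ⌊y⌋₊ = 0 :=
    max_eq_right (sub_nonpos.2 (log_le_harmonic_floor y (by linarith)))
  have htel := pow_sub_pow_le_add_one_mul_sum_range_sub_mul_pow (L := L) (M := ⌊y⌋₊)
    (fun m _ ↦ le_max_right _ _) N
  rw [hL0, hLM, zero_pow N.succ_ne_zero, sub_zero] at htel
  rw [div_le_iff₀' (by positivity), sum_Icc_one_eq_sum_range_add_one]
  refine htel.trans (mul_le_mul_of_nonneg_left (sum_le_sum fun m hm ↦ ?_) (by positivity))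
  have hm1 : 1 ≤ y / (m + 1 : ℕ) := one_le_div_natCast_of_mem (by simpa using hm)
  have hlog : Real.log (y / (m + 1 : ℕ)) = Real.log y - Real.log (m + 1 : ℕ) :=
    Real.log_div (by linarith) (by positivity)
  have hstep : L m - L (m + 1) ≤ ((m + 1 : ℕ) : ℝ)⁻¹ := by
    rw [← harmonic_succ_sub_harmonic]
    have hmono : (harmonic m : ℝ) ≤ harmonic (m + 1) := harmonic_cast_mono m.le_succ
    grind
  have hLlog : L m ≤ Real.log (y / (m + 1 : ℕ)) :=
    max_le (by linarith [log_add_one_le_harmonic m]) (Real.log_nonneg hm1)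
  gcongr

theorem sum_inv_mul_log_div_add_pow_le {y c : ℝ} (hy : 1 ≤ y) (hc : 0 ≤ c) (N : ℕ) :
    ∑ m ∈ Icc 1 ⌊y⌋₊, (m : ℝ)⁻¹ * (Real.log (y / m) + c) ^ N ≤
      (Real.log y + c + 1) ^ (N + 1) / (N + 1) := by
  let L (m : ℕ) : ℝ := Real.log y + c + 1 - harmonic m
  have hL (m : ℕ) (hm : m ≤ ⌊y⌋₊) : 0 ≤ L m := by
    have hmono : (harmonic m : ℝ) ≤ harmonic ⌊y⌋₊ := harmonic_cast_mono hm
    have := harmonic_floor_le_one_add_log y hy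
    simp only [L]
    linarith
  have htel := add_one_mul_sum_range_sub_mul_pow_succ_le hL N
  have hL0 : L 0 = Real.log y + c + 1 := by simp [L]
  rw [le_div_iff₀' (by positivity), sum_Icc_one_eq_sum_range_add_one]
  refine le_trans (mul_le_mul_of_nonneg_left (sum_le_sum fun m hm ↦ ?_) (by positivity))
    (htel.trans ?_)
  · have hm1 : 1 ≤ y / (m + 1 : ℕ) := one_le_div_natCast_of_mem (by simpa using hm)
    have hlog : Real.log (y / (m + 1 : ℕ)) = Real.log y - Real.log (m + 1 : ℕ) :=
      Real.log_div (by linarith) (by positivity)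
    have hstep : L m - L (m + 1) = ((m + 1 : ℕ) : ℝ)⁻¹ := by
      rw [← harmonic_succ_sub_harmonic]; ring
    have hLlog : Real.log (y / (m + 1 : ℕ)) + c ≤ L (m + 1) := by
      have := harmonic_le_one_add_log (m + 1)
      simp only [L]
      linarith
    rw [hstep]
    have := Real.log_nonneg hm1
    gcongr
  · rw [hL0]
    exact sub_le_self _ (pow_nonneg (hL _ le_rfl) _)

end LogarithmicSums

section LogSum

/-- The arithmetic function `n ↦ f n * n ^ (-s)`, whose values are the terms of the Dirichlet series
of `f` at the real point `s`. -/
noncomputable def dirichletTwist (s : ℝ) (f : ArithmeticFunction ℝ) : ArithmeticFunction ℝ :=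
  ⟨fun n ↦ f n * (n : ℝ) ^ (-s), by simp⟩

theorem dirichletTwist_apply (s : ℝ) (f : ArithmeticFunction ℝ) (n : ℕ) :
    dirichletTwist s f n = f n * (n : ℝ) ^ (-s) :=
  rfl

theorem dirichletTwist_one_apply (f : ArithmeticFunction ℝ) (n : ℕ) :
    dirichletTwist 1 f n = f n / n := by
  rw [dirichletTwist_apply, Real.rpow_neg_one, div_eq_mul_inv]

theorem dirichletTwist_apply_pow (s : ℝ) (f : ArithmeticFunction ℝ) (p k : ℕ) :
    dirichletTwist s f (p ^ k) = f (p ^ k) * ((p : ℝ) ^ (-s)) ^ k := by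
  rw [dirichletTwist_apply, Nat.cast_pow, Real.rpow_pow_comm p.cast_nonneg]

theorem dirichletTwist_mul (s : ℝ) (f g : ArithmeticFunction ℝ) :
    dirichletTwist s (f * g) = dirichletTwist s f * dirichletTwist s g := by
  ext n
  simp only [dirichletTwist_apply, mul_apply, sum_mul]
  refine sum_congr rfl fun x hx ↦ ?_
  rw [← (Nat.mem_divisorsAntidiagonal.1 hx).1, Nat.cast_mul,
    Real.mul_rpow x.1.cast_nonneg x.2.cast_nonneg, mul_mul_mul_comm]

theorem isMultiplicative_dirichletTwist {f : ArithmeticFunction ℝ} (hf : f.IsMultiplicative)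
    (s : ℝ) : (dirichletTwist s f).IsMultiplicative := by
  refine ⟨by simp [dirichletTwist_apply, hf.map_one], fun {m n} hmn ↦ ?_⟩
  simp only [dirichletTwist_apply]
  rw [hf.map_mul_of_coprime hmn, Nat.cast_mul, Real.mul_rpow m.cast_nonneg n.cast_nonneg,
    mul_mul_mul_comm]

/-- The logarithmic sum `∑ k ≤ x, f k / k` of an arithmetic function. -/
noncomputable def logSum (f : ArithmeticFunction ℝ) (x : ℝ) : ℝ :=
  ∑ k ∈ Icc 1 ⌊x⌋₊, f k / k

theorem logSum_eq_zero_of_lt_one (f : ArithmeticFunction ℝ) {x : ℝ} (hx : x < 1) :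
    logSum f x = 0 := by
  rw [logSum, Nat.floor_eq_zero.2 hx, Icc_eq_empty (by simp), sum_empty]

theorem logSum_one {x : ℝ} (hx : 1 ≤ x) : logSum 1 x = 1 := by
  rw [logSum, sum_eq_single_of_mem 1 (by simpa using hx)
    fun k _ hk ↦ by rw [one_apply_ne hk, zero_div]]
  simp

theorem logSum_mul (f g : ArithmeticFunction ℝ) (x : ℝ) :
    logSum (f * g) x = ∑ m ∈ Icc 1 ⌊x⌋₊, f m / m * logSum g (x / m) := by
  simp only [logSum, ← dirichletTwist_one_apply, dirichletTwist_mul, Nat.floor_div_natCast]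
  exact sum_Ioc_mul_eq_sum_sum _ _ _

end LogSum

section ZetaPowers

open scoped ArithmeticFunction.zeta

theorem logSum_zeta_mul (f : ArithmeticFunction ℝ) (x : ℝ) :
    logSum (ζ * f) x = ∑ m ∈ Icc 1 ⌊x⌋₊, (m : ℝ)⁻¹ * logSum f (x / m) := by
  rw [logSum_mul]
  refine sum_congr rfl fun m hm ↦ ?_
  rw [natCoe_apply, zeta_apply_ne (Nat.one_le_iff_ne_zero.1 (mem_Icc.1 hm).1), Nat.cast_one,
    one_div]

theorem log_pow_div_factorial_le_logSum_zeta_pow (N : ℕ) {y : ℝ} (hy : 1 ≤ y) :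
    Real.log y ^ N / N.factorial ≤ logSum (ζ ^ N) y := by
  induction N generalizing y with
  | zero => simp [logSum_one hy]
  | succ N ih =>
    rw [pow_succ' (ζ : ArithmeticFunction ℝ), logSum_zeta_mul]
    calc Real.log y ^ (N + 1) / (N + 1).factorial
      _ = Real.log y ^ (N + 1) / (N + 1) / N.factorial := by
        rw [Nat.factorial_succ, Nat.cast_mul, Nat.cast_succ, div_div]
      _ ≤ (∑ m ∈ Icc 1 ⌊y⌋₊, (m : ℝ)⁻¹ * Real.log (y / m) ^ N) / N.factorial := by
        gcongr
        exact log_pow_succ_le_sum_inv_mul_log_div_pow hy N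
      _ = ∑ m ∈ Icc 1 ⌊y⌋₊, (m : ℝ)⁻¹ * (Real.log (y / m) ^ N / N.factorial) := by
        simp only [sum_div, mul_div_assoc]
      _ ≤ ∑ m ∈ Icc 1 ⌊y⌋₊, (m : ℝ)⁻¹ * logSum (ζ ^ N) (y / m) := by
        gcongr with m hm
        exact ih (one_le_div_natCast_of_mem hm)

theorem logSum_zeta_pow_le (N : ℕ) {y : ℝ} (hy : 1 ≤ y) :
    logSum (ζ ^ N) y ≤ (Real.log y + N) ^ N / N.factorial := by
  induction N generalizing y with
  | zero => simp [logSum_one hy]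
  | succ N ih =>
    rw [pow_succ' (ζ : ArithmeticFunction ℝ), logSum_zeta_mul]
    calc ∑ m ∈ Icc 1 ⌊y⌋₊, (m : ℝ)⁻¹ * logSum (ζ ^ N) (y / m)
      _ ≤ ∑ m ∈ Icc 1 ⌊y⌋₊, (m : ℝ)⁻¹ * ((Real.log (y / m) + N) ^ N / N.factorial) := by
        gcongr with m hm
        exact ih (one_le_div_natCast_of_mem hm)
      _ = (∑ m ∈ Icc 1 ⌊y⌋₊, (m : ℝ)⁻¹ * (Real.log (y / m) + N) ^ N) / N.factorial := by
        simp only [sum_div, mul_div_assoc]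
      _ ≤ (Real.log y + N + 1) ^ (N + 1) / (N + 1) / N.factorial := by
        gcongr
        exact sum_inv_mul_log_div_add_pow_le hy N.cast_nonneg N
      _ = (Real.log y + (N + 1 : ℕ)) ^ (N + 1) / (N + 1).factorial := by
        rw [Nat.factorial_succ, Nat.cast_mul, Nat.cast_succ, div_div, add_assoc]

theorem abs_pow_sub_pow_le_of_le_mul {a l B t : ℝ} (ha : 0 ≤ a) (hl : 0 ≤ l) (hB : 1 ≤ B)
    (haB : a ≤ B * l) (ht : |a - l| ≤ t) (n : ℕ) :
    |a ^ n - l ^ n| ≤ t * n * B ^ (n - 1) * l ^ (n - 1) := by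
  have hmax : max |a| |l| ≤ B * l := by
    rw [abs_of_nonneg ha, abs_of_nonneg hl]
    exact max_le haB (le_mul_of_one_le_left hl hB)
  calc |a ^ n - l ^ n|
    _ ≤ |a - l| * n * max |a| |l| ^ (n - 1) := abs_pow_sub_pow_le ..
    _ ≤ t * n * (B * l) ^ (n - 1) := by
      have := (abs_nonneg _).trans ht
      gcongr
    _ = t * n * B ^ (n - 1) * l ^ (n - 1) := by rw [mul_pow, mul_assoc (t * n)]

theorem exists_abs_logSum_zeta_pow_div_sub_le {κ : ℕ} (hκ : κ ≠ 0) :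
    ∃ C, 0 ≤ C ∧ ∀ x : ℝ, 2 ≤ x → ∀ m : ℕ, m ≠ 0 →
      |logSum (ζ ^ κ) (x / m) - Real.log x ^ κ / κ.factorial| ≤
        C * (1 + Real.log m) * Real.log x ^ (κ - 1) := by
  have hlog2 : 0 < Real.log 2 := Real.log_pos one_lt_two
  let B : ℝ := 1 + κ / Real.log 2
  have hB : 1 ≤ B := le_add_of_nonneg_right (by positivity)
  refine ⟨(1 + κ) * κ * B ^ (κ - 1) / κ.factorial, by positivity, fun x hx m hm ↦ ?_⟩
  have hm0 : (0 : ℝ) < m := by exact_mod_cast hm.bot_lt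
  have hl : Real.log 2 ≤ Real.log x := Real.log_le_log two_pos hx
  have hlogm : 0 ≤ Real.log m := Real.log_natCast_nonneg m
  have hκB : Real.log x + κ ≤ B * Real.log x := by
    have : κ / Real.log 2 * Real.log 2 ≤ κ / Real.log 2 * Real.log x := by gcongr
    rw [div_mul_cancel₀ _ hlog2.ne'] at this
    linarith
  have hpow (a : ℝ) (ha : 0 ≤ a) (hal : |a - Real.log x| ≤ κ + Real.log m)
      (haκ : a ≤ Real.log x + κ) :
      |a ^ κ / κ.factorial - Real.log x ^ κ / κ.factorial| ≤
        (1 + κ) * κ * B ^ (κ - 1) / κ.factorial * (1 + Real.log m) * Real.log x ^ (κ - 1) := by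
    have ht : |a - Real.log x| ≤ (1 + κ) * (1 + Real.log m) := by
      nlinarith [mul_nonneg κ.cast_nonneg hlogm]
    rw [← sub_div, abs_div, Nat.abs_cast, div_mul_eq_mul_div, div_mul_eq_mul_div]
    gcongr
    refine (abs_pow_sub_pow_le_of_le_mul ha (by linarith) hB (haκ.trans hκB) ht κ).trans_eq ?_
    ring
  obtain hmx | hxm := le_or_gt (m : ℝ) x
  · have hxm1 : 1 ≤ x / m := (one_le_div hm0).2 hmx
    have hlogdiv : Real.log (x / m) = Real.log x - Real.log m :=
      Real.log_div (by linarith) hm0.ne'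
    have hdiv0 := Real.log_nonneg hxm1
    have hlo := hpow (Real.log (x / m)) hdiv0 (by grind) (by linarith)
    have hup := hpow (Real.log (x / m) + κ) (by positivity) (by grind) (by linarith)
    exact (abs_le_max_abs_abs (sub_le_sub_right (log_pow_div_factorial_le_logSum_zeta_pow κ hxm1) _)
      (sub_le_sub_right (logSum_zeta_pow_le κ hxm1) _)).trans (max_le hlo hup)
  · have hlm : Real.log x ≤ Real.log m := Real.log_le_log (by linarith) hxm.le
    rw [logSum_eq_zero_of_lt_one _ ((div_lt_one hm0).2 hxm)]
    simpa [hκ] using hpow 0 le_rfl (by grind) (by linarith)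

end ZetaPowers

section Convolution

open scoped ArithmeticFunction.zeta

theorem hasSum_logSum_mul (f g : ArithmeticFunction ℝ) {x : ℝ} (hx : 0 ≤ x) :
    HasSum (fun m : ℕ ↦ f m / m * logSum g (x / m)) (logSum (f * g) x) := by
  rw [logSum_mul]
  refine hasSum_sum_of_ne_finset_zero fun m hm ↦ ?_
  obtain rfl | hm0 := eq_or_ne m 0
  · simp
  · have hxm : x < m := by
      rw [mem_Icc, not_and] at hm
      exact (Nat.floor_lt hx).1 (not_le.1 (hm (Nat.one_le_iff_ne_zero.2 hm0)))
    rw [logSum_eq_zero_of_lt_one g ((div_lt_one (hx.trans_lt hxm)).2 hxm), mul_zero]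

theorem exists_abs_logSum_mul_zeta_pow_sub_le {κ : ℕ} (hκ : κ ≠ 0) {h : ArithmeticFunction ℝ}
    (hh : Summable fun n : ℕ ↦ |h n| / n * (1 + Real.log n)) :
    ∃ C, 0 ≤ C ∧ ∀ x : ℝ, 2 ≤ x →
      |logSum (h * ζ ^ κ) x - (∑' n : ℕ, h n / n) / κ.factorial * Real.log x ^ κ| ≤
        C * Real.log x ^ (κ - 1) := by
  obtain ⟨C, hC, hbound⟩ := exists_abs_logSum_zeta_pow_div_sub_le hκ
  have hterm (n : ℕ) : 0 ≤ |h n| / n * (1 + Real.log n) := by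
    have := Real.log_natCast_nonneg n
    positivity
  have hsum : Summable fun n : ℕ ↦ h n / n := by
    refine .of_norm_bounded hh fun n ↦ ?_
    rw [Real.norm_eq_abs, abs_div, Nat.abs_cast]
    exact le_mul_of_one_le_right (by positivity)
      (le_add_of_nonneg_right (Real.log_natCast_nonneg n))
  refine ⟨C * ∑' n : ℕ, |h n| / n * (1 + Real.log n), mul_nonneg hC (tsum_nonneg hterm),
    fun x hx ↦ ?_⟩
  have hdiff := (hasSum_logSum_mul h (ζ ^ κ) (by linarith : 0 ≤ x)).sub
    (hsum.hasSum.mul_right (Real.log x ^ κ / κ.factorial))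
  rw [div_mul_eq_mul_div, mul_div_assoc]
  refine hdiff.norm_le_of_bounded
    ((hh.hasSum.mul_left C).mul_right (Real.log x ^ (κ - 1))) fun m ↦ ?_
  obtain rfl | hm := eq_or_ne m 0
  · simp
  · rw [← mul_sub, Real.norm_eq_abs, abs_mul, abs_div, Nat.abs_cast]
    calc |h m| / m * |logSum (ζ ^ κ) (x / m) - Real.log x ^ κ / κ.factorial|
      _ ≤ |h m| / m * (C * (1 + Real.log m) * Real.log x ^ (κ - 1)) := by
        gcongr
        exact hbound x hx m hm
      _ = C * (|h m| / m * (1 + Real.log m)) * Real.log x ^ (κ - 1) := by ring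

end Convolution

section MoebiusPowers

open scoped ArithmeticFunction.zeta ArithmeticFunction.Moebius

variable {R : Type*} [CommRing R]

theorem mul_moebius_pow_mul_zeta_pow (f : ArithmeticFunction R) (j : ℕ) :
    f * μ ^ j * ζ ^ j = f := by
  rw [mul_assoc, ← mul_pow, coe_moebius_mul_coe_zeta, one_pow, mul_one]

theorem mul_moebius_apply_prime_pow_succ (f : ArithmeticFunction R) {p : ℕ} (hp : p.Prime)
    (k : ℕ) : (f * μ) (p ^ (k + 1)) = f (p ^ (k + 1)) - f (p ^ k) := by
  have hsum (i : ℕ) : ∑ j ∈ range (i + 1), (f * μ) (p ^ j) = f (p ^ i) := by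
    rw [← Nat.sum_divisors_prime_pow hp, ← coe_mul_zeta_apply, mul_assoc,
      coe_moebius_mul_coe_zeta, mul_one]
  rw [← hsum (k + 1), ← hsum k, sum_range_succ, add_sub_cancel_left]

theorem mul_moebius_apply_one (f : ArithmeticFunction R) : (f * μ) 1 = f 1 := by
  simp

theorem mul_moebius_pow_apply_one (f : ArithmeticFunction R) (j : ℕ) : (f * μ ^ j) 1 = f 1 := by
  induction j with
  | zero => simp
  | succ j ih => rw [pow_succ, ← mul_assoc, mul_moebius_apply_one, ih]

theorem mul_moebius_pow_apply_prime (f : ArithmeticFunction R) {p : ℕ} (hp : p.Prime) (j : ℕ) :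
    (f * μ ^ j) p = f p - j * f 1 := by
  induction j with
  | zero => simp
  | succ j ih =>
    have hstep := mul_moebius_apply_prime_pow_succ (f * (μ : ArithmeticFunction R) ^ j) hp 0
    rw [zero_add, pow_one, pow_zero, mul_moebius_pow_apply_one, ih] at hstep
    rw [pow_succ, ← mul_assoc, hstep, Nat.cast_succ, add_one_mul, sub_sub]

theorem abs_mul_moebius_pow_apply_prime_pow_le {f : ArithmeticFunction ℝ} {b : ℕ → ℝ}
    (hb : Monotone b) {p : ℕ} (hp : p.Prime) (hf : ∀ k, |f (p ^ k)| ≤ b k) (j k : ℕ) :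
    |(f * μ ^ j) (p ^ k)| ≤ 2 ^ j * b k := by
  induction j generalizing k with
  | zero => simpa using hf k
  | succ j ih =>
    rw [pow_succ (μ : ArithmeticFunction ℝ), ← mul_assoc, pow_succ (2 : ℝ), mul_two,
      add_mul]
    cases k with
    | zero =>
      have h0 := ih 0
      rw [pow_zero] at h0 ⊢
      rw [mul_moebius_apply_one]
      exact h0.trans (le_add_of_nonneg_right ((abs_nonneg _).trans h0))
    | succ k =>
      rw [mul_moebius_apply_prime_pow_succ _ hp]
      calc |(f * μ ^ j) (p ^ (k + 1)) - (f * μ ^ j) (p ^ k)|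
        _ ≤ |(f * μ ^ j) (p ^ (k + 1))| + |(f * μ ^ j) (p ^ k)| := abs_sub _ _
        _ ≤ 2 ^ j * b (k + 1) + 2 ^ j * b (k + 1) := by
          gcongr
          · exact ih (k + 1)
          · exact (ih k).trans (by gcongr; exact hb k.le_succ)

variable [TopologicalSpace R] [IsTopologicalRing R]

theorem hasSum_mul_moebius_apply_prime_pow_mul_pow {f : ArithmeticFunction R} {p : ℕ}
    (hp : p.Prime) {q S : R} (hf : HasSum (fun k ↦ f (p ^ k) * q ^ k) S) :
    HasSum (fun k ↦ (f * μ) (p ^ k) * q ^ k) ((1 - q) * S) := by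
  rw [← hasSum_nat_add_iff' 1]
  have h := ((hasSum_nat_add_iff' 1).2 hf).sub (hf.mul_left q)
  convert h using 1
  · ext k
    rw [mul_moebius_apply_prime_pow_succ f hp]
    ring
  · simp only [range_one, sum_singleton, pow_zero, mul_moebius_apply_one]
    ring

theorem hasSum_mul_moebius_pow_apply_prime_pow_mul_pow {f : ArithmeticFunction R} {p : ℕ}
    (hp : p.Prime) {q S : R} (hf : HasSum (fun k ↦ f (p ^ k) * q ^ k) S) (j : ℕ) :
    HasSum (fun k ↦ (f * μ ^ j) (p ^ k) * q ^ k) ((1 - q) ^ j * S) := by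
  induction j with
  | zero => simpa using hf
  | succ j ih =>
    rw [pow_succ (μ : ArithmeticFunction R), ← mul_assoc, pow_succ' (1 - q), mul_assoc (1 - q)]
    exact hasSum_mul_moebius_apply_prime_pow_mul_pow hp ih

end MoebiusPowers

section EulerProducts

theorem sum_range_norm_le_prod_primesBelow_tsum {F : Type*} [NormedField F]
    {f : ArithmeticFunction F} (hf : f.IsMultiplicative)
    (hs : ∀ {p : ℕ}, p.Prime → Summable fun k ↦ ‖f (p ^ k)‖) (N : ℕ) :
    ∑ n ∈ range N, ‖f n‖ ≤ ∏ p ∈ N.primesBelow, ∑' k, ‖f (p ^ k)‖ := by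
  have hsmooth := (EulerProduct.summable_and_hasSum_smoothNumbers_prod_primesBelow_tsum
    (f := fun n ↦ ‖f n‖) (by rw [hf.map_one, norm_one])
    (fun hmn ↦ by rw [hf.map_mul_of_coprime hmn, norm_mul])
    (fun hp ↦ by simpa only [norm_norm] using hs hp) N).2
  calc ∑ n ∈ range N, ‖f n‖
    _ = ∑ n ∈ range N, N.smoothNumbers.indicator (fun n ↦ ‖f n‖) n := by
      refine sum_congr rfl fun n hn ↦ ?_
      obtain rfl | hn0 := eq_or_ne n 0
      · simp [Set.indicator]
      · have hmem : n ∈ N.smoothNumbers := Nat.mem_smoothNumbers'.2 fun p _ hpn ↦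
          (Nat.le_of_dvd hn0.bot_lt hpn).trans_lt (mem_range.1 hn)
        rw [Set.indicator_of_mem hmem]
    _ ≤ ∏ p ∈ N.primesBelow, ∑' k, ‖f (p ^ k)‖ :=
      sum_le_hasSum _ (fun n _ ↦ Set.indicator_nonneg (fun n _ ↦ norm_nonneg _) n)
        (hasSum_subtype_iff_indicator.1 hsmooth)

theorem summable_norm_of_summable_norm_apply_prime_pow {F : Type*} [NormedField F]
    {f : ArithmeticFunction F} (hf : f.IsMultiplicative)
    (hs : Summable fun pk : Nat.Primes × ℕ ↦ ‖f (pk.1 ^ (pk.2 + 1))‖) :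
    Summable fun n ↦ ‖f n‖ := by
  have hlocal {p : ℕ} (hp : p.Prime) : Summable fun k ↦ ‖f (p ^ k)‖ :=
    (summable_nat_add_iff 1).1 (hs.prod_factor ⟨p, hp⟩)
  refine summable_of_sum_range_le (c := Real.exp (∑' p : Nat.Primes, ∑' k, ‖f (p ^ (k + 1))‖))
    (fun n ↦ norm_nonneg _) fun N ↦ ?_
  calc ∑ n ∈ range N, ‖f n‖
    _ ≤ ∏ p ∈ N.primesBelow, ∑' k, ‖f (p ^ k)‖ :=
      sum_range_norm_le_prod_primesBelow_tsum hf hlocal N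
    _ ≤ ∏ p ∈ N.primesBelow, Real.exp (∑' k, ‖f (p ^ (k + 1))‖) := by
      refine prod_le_prod (fun p _ ↦ tsum_nonneg fun k ↦ norm_nonneg _) fun p hp ↦ ?_
      rw [(hlocal (Nat.prime_of_mem_primesBelow hp)).tsum_eq_zero_add, pow_zero, hf.map_one,
        norm_one, add_comm]
      exact Real.add_one_le_exp _
    _ = Real.exp (∑ p ∈ N.primesBelow, ∑' k, ‖f (p ^ (k + 1))‖) := (Real.exp_sum _ _).symm
    _ ≤ Real.exp (∑' p : Nat.Primes, ∑' k, ‖f (p ^ (k + 1))‖) := by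
      gcongr
      have hsub := sum_subtype_of_mem (fun p ↦ ∑' k, ‖f (p ^ (k + 1))‖)
        fun p (hp : p ∈ N.primesBelow) ↦ Nat.prime_of_mem_primesBelow hp
      rw [← hsub]
      exact hs.prod.sum_le_tsum (ι := Nat.Primes) _ fun p _ ↦ tsum_nonneg fun k ↦ norm_nonneg _

theorem tsum_pos_of_forall_tsum_prime_pow_pos {f : ArithmeticFunction ℝ}
    (hf : f.IsMultiplicative) (hs : Summable fun n ↦ ‖f n‖)
    (hpos : ∀ p : Nat.Primes, 0 < ∑' k, f (p ^ k)) : 0 < ∑' n, f n := by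
  have hinj : Function.Injective fun pk : Nat.Primes × ℕ ↦ (pk.1 : ℕ) ^ (pk.2 + 1) :=
    Subtype.val_injective.comp Nat.Primes.prodNatEquiv.injective
  have hprimePow : Summable fun pk : Nat.Primes × ℕ ↦ f (pk.1 ^ (pk.2 + 1)) :=
    hs.of_norm.comp_injective hinj
  have htsum (p : Nat.Primes) : ∑' k, f (p ^ k) = 1 + ∑' k, f (p ^ (k + 1)) := by
    have hlocal : Summable fun k ↦ f (p ^ k) :=
      (summable_nat_add_iff 1).1 (hprimePow.prod_factor p)
    rw [hlocal.tsum_eq_zero_add, pow_zero, hf.map_one]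
  have hlog := Real.summable_log_one_add_of_summable hprimePow.prod
  simp only [← htsum] at hlog
  rw [← hf.eulerProduct_tprod hs, ← Real.rexp_tsum_eq_tprod hpos hlog]
  exact Real.exp_pos _

end EulerProducts

section DirichletSeries

theorem abs_mul_pow_succ_le_sq_mul {a b : ℕ → ℝ} (ha : a 1 = 0) (hab : ∀ k, |a k| ≤ b k)
    {q z : ℝ} (hq : 0 ≤ q) (hz : 0 < z) (hqz : q ≤ z) (k : ℕ) :
    |a (k + 1)| * q ^ (k + 1) ≤ q ^ 2 * (b (k + 1) * z ^ (k + 1) / z ^ 2) := by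
  have hb (k : ℕ) : 0 ≤ b k := (abs_nonneg _).trans (hab k)
  cases k with
  | zero =>
    have := hb 1
    rw [zero_add, ha, abs_zero, zero_mul]
    positivity
  | succ k =>
    calc |a (k + 2)| * q ^ (k + 2)
      _ = q ^ 2 * (|a (k + 2)| * q ^ k) := by ring
      _ ≤ q ^ 2 * (b (k + 2) * z ^ k) := by
        gcongr
        · exact hb _
        · exact hab _
      _ = q ^ 2 * (b (k + 2) * z ^ (k + 2) / z ^ 2) := by
        rw [pow_add z, ← mul_assoc (b (k + 2)), mul_div_cancel_right₀ _ (pow_ne_zero 2 hz.ne')]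

theorem summable_norm_dirichletTwist_of_prime_apply_eq_zero {h : ArithmeticFunction ℝ}
    (hh : h.IsMultiplicative) (hprime : ∀ p : ℕ, p.Prime → h p = 0) {b : ℕ → ℝ}
    (hb : ∀ p : ℕ, p.Prime → ∀ k, |h (p ^ k)| ≤ b k) {s : ℝ} (hs : 1 / 2 < s)
    (hbs : Summable fun k ↦ b k * ((2 : ℝ) ^ (-s)) ^ k) :
    Summable fun n ↦ ‖dirichletTwist s h n‖ := by
  have hb0 (k : ℕ) : 0 ≤ b k := (abs_nonneg _).trans (hb 2 Nat.prime_two k)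
  have hprimes : Summable fun p : Nat.Primes ↦ ((p : ℝ) ^ (-s)) ^ 2 := by
    have hnat : Summable fun n : ℕ ↦ ((n : ℝ) ^ (-s)) ^ 2 := by
      simp only [← Real.rpow_mul_natCast (Nat.cast_nonneg _)]
      exact Real.summable_nat_rpow.2 (by push_cast; linarith)
    exact hnat.comp_injective Subtype.val_injective
  have htail : Summable fun k ↦ b (k + 1) * ((2 : ℝ) ^ (-s)) ^ (k + 1) / ((2 : ℝ) ^ (-s)) ^ 2 :=
    ((summable_nat_add_iff 1).2 hbs).div_const _
  have hprod := hprimes.mul_of_nonneg htail (fun p ↦ by positivity)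
    fun k ↦ by have := hb0 (k + 1); positivity
  refine summable_norm_of_summable_norm_apply_prime_pow (isMultiplicative_dirichletTwist hh s) <|
    hprod.of_nonneg_of_le (fun _ ↦ norm_nonneg _) fun ⟨p, k⟩ ↦ ?_
  have hp2 : (2 : ℝ) ≤ p := by exact_mod_cast p.2.two_le
  rw [dirichletTwist_apply_pow, norm_mul, norm_pow, Real.norm_eq_abs,
    Real.norm_of_nonneg (by positivity)]
  exact abs_mul_pow_succ_le_sq_mul (a := fun k ↦ h (p ^ k)) (by simpa using hprime p p.2)
    (hb p p.2) (by positivity) (by positivity)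
    (Real.rpow_le_rpow_of_nonpos two_pos hp2 (by linarith)) k

theorem summable_abs_div_mul_one_add_log {h : ArithmeticFunction ℝ} {s : ℝ} (hs : s < 1)
    (hh : Summable fun n ↦ ‖dirichletTwist s h n‖) :
    Summable fun n : ℕ ↦ |h n| / n * (1 + Real.log n) := by
  refine (hh.mul_left (1 + 1 / (1 - s))).of_nonneg_of_le (fun n ↦ ?_) fun n ↦ ?_
  · have := Real.log_natCast_nonneg n
    positivity
  · obtain rfl | hn := eq_or_ne n 0
    · simp
    have hn1 : (1 : ℝ) ≤ n := by exact_mod_cast Nat.one_le_iff_ne_zero.2 hn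
    have hlog : Real.log n ≤ (n : ℝ) ^ (1 - s) / (1 - s) :=
      Real.log_le_rpow_div n.cast_nonneg (sub_pos.2 hs)
    have hone : 1 ≤ (n : ℝ) ^ (1 - s) := Real.one_le_rpow hn1 (sub_nonneg.2 hs.le)
    have hsplit : (n : ℝ) ^ (-s) = (n : ℝ) ^ (1 - s) / n := by
      rw [← Real.rpow_sub_one (by positivity)]
      ring_nf
    rw [dirichletTwist_apply, norm_mul, Real.norm_eq_abs,
      Real.norm_of_nonneg (by positivity), hsplit]
    calc |h n| / n * (1 + Real.log n)
      _ ≤ |h n| / n * ((n : ℝ) ^ (1 - s) + (n : ℝ) ^ (1 - s) / (1 - s)) := by gcongr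
      _ = (1 + 1 / (1 - s)) * (|h n| * ((n : ℝ) ^ (1 - s) / n)) := by ring

end DirichletSeries

section MultiplicativeLogSums

open scoped ArithmeticFunction.zeta ArithmeticFunction.Moebius

variable {f : ArithmeticFunction ℝ} {κ : ℕ} {b : ℕ → ℝ}

theorem isMultiplicative_mul_moebius_pow (hf : f.IsMultiplicative) (j : ℕ) :
    (f * (μ : ArithmeticFunction ℝ) ^ j).IsMultiplicative :=
  hf.mul isMultiplicative_moebius.intCast.pow

theorem summable_norm_dirichletTwist_mul_moebius_pow (hf : f.IsMultiplicative)
    (hfκ : ∀ p : ℕ, p.Prime → f p = κ) (hb : Monotone b)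
    (hbq : ∀ q : ℝ, 0 ≤ q → q < 1 → Summable fun k ↦ b k * q ^ k)
    (hfb : ∀ p : ℕ, p.Prime → ∀ k, |f (p ^ k)| ≤ b k) {s : ℝ} (hs : 1 / 2 < s) :
    Summable fun n ↦ ‖dirichletTwist s (f * (μ : ArithmeticFunction ℝ) ^ κ) n‖ := by
  refine summable_norm_dirichletTwist_of_prime_apply_eq_zero (b := fun k ↦ 2 ^ κ * b k)
    (isMultiplicative_mul_moebius_pow hf κ) (fun p hp ↦ ?_)
    (fun p hp ↦ abs_mul_moebius_pow_apply_prime_pow_le hb hp (hfb p hp) κ) hs ?_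
  · rw [mul_moebius_pow_apply_prime f hp, hf.map_one, mul_one, hfκ p hp, sub_self]
  · simp only [mul_assoc]
    exact (hbq _ (by positivity)
      (Real.rpow_lt_one_of_one_lt_of_neg one_lt_two (by linarith))).mul_left _

theorem tsum_mul_moebius_pow_div_pos (hf : f.IsMultiplicative) (hf0 : ∀ n, 0 ≤ f n)
    (hfκ : ∀ p : ℕ, p.Prime → f p = κ) (hb : Monotone b)
    (hbq : ∀ q : ℝ, 0 ≤ q → q < 1 → Summable fun k ↦ b k * q ^ k)
    (hfb : ∀ p : ℕ, p.Prime → ∀ k, |f (p ^ k)| ≤ b k) :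
    0 < ∑' n : ℕ, (f * (μ : ArithmeticFunction ℝ) ^ κ) n / n := by
  simp only [← dirichletTwist_one_apply]
  refine tsum_pos_of_forall_tsum_prime_pow_pos
    (isMultiplicative_dirichletTwist (isMultiplicative_mul_moebius_pow hf κ) 1)
    (summable_norm_dirichletTwist_mul_moebius_pow hf hfκ hb hbq hfb (by norm_num)) fun p ↦ ?_
  simp only [dirichletTwist_apply_pow, Real.rpow_neg_one]
  have hq0 : 0 ≤ (p : ℝ)⁻¹ := by positivity
  have hq1 : (p : ℝ)⁻¹ < 1 := inv_lt_one_of_one_lt₀ (by exact_mod_cast p.2.one_lt)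
  have hlocal : Summable fun k ↦ f (p ^ k) * (p : ℝ)⁻¹ ^ k :=
    (hbq _ hq0 hq1).of_nonneg_of_le (fun k ↦ mul_nonneg (hf0 _) (by positivity))
      fun k ↦ by gcongr; exact (le_abs_self _).trans (hfb p p.2 k)
  rw [(hasSum_mul_moebius_pow_apply_prime_pow_mul_pow p.2 hlocal.hasSum κ).tsum_eq]
  refine mul_pos (pow_pos (sub_pos.2 hq1) κ) ?_
  refine hlocal.tsum_pos (fun k ↦ mul_nonneg (hf0 _) (by positivity)) 0 ?_
  rw [pow_zero, pow_zero, hf.map_one, mul_one]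
  exact one_pos

theorem exists_abs_logSum_sub_mul_log_pow_le (hκ : κ ≠ 0) (hf : f.IsMultiplicative)
    (hf0 : ∀ n, 0 ≤ f n) (hfκ : ∀ p : ℕ, p.Prime → f p = κ) (hb : Monotone b)
    (hbq : ∀ q : ℝ, 0 ≤ q → q < 1 → Summable fun k ↦ b k * q ^ k)
    (hfb : ∀ p : ℕ, p.Prime → ∀ k, |f (p ^ k)| ≤ b k) :
    ∃ A, 0 < A ∧ ∃ C, 0 ≤ C ∧ ∀ x : ℝ, 2 ≤ x →
      |logSum f x - A * Real.log x ^ κ| ≤ C * Real.log x ^ (κ - 1) := by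
  have hh : Summable fun n : ℕ ↦ |(f * μ ^ κ) n| / n * (1 + Real.log n) :=
    summable_abs_div_mul_one_add_log (s := 3 / 4) (by norm_num)
      (summable_norm_dirichletTwist_mul_moebius_pow hf hfκ hb hbq hfb (by norm_num))
  have hconv := exists_abs_logSum_mul_zeta_pow_sub_le hκ hh
  rw [mul_moebius_pow_mul_zeta_pow] at hconv
  exact ⟨_, div_pos (tsum_mul_moebius_pow_div_pos hf hf0 hfκ hb hbq hfb) (by positivity), hconv⟩

end MultiplicativeLogSums

section DivisorPowers

open scoped ArithmeticFunction.zeta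

theorem dFold_succ_apply_prime_pow (r : ℕ) {p : ℕ} (hp : p.Prime) (k : ℕ) :
    dFold (r + 1) (p ^ k) = ∑ i ∈ range (k + 1), dFold r (p ^ i) := by
  rw [dFold, pow_succ, mul_zeta_apply, Nat.sum_divisors_prime_pow hp]
  rfl

theorem dFold_apply_prime_pow_le (r : ℕ) {p : ℕ} (hp : p.Prime) (k : ℕ) :
    dFold r (p ^ k) ≤ (k + 1) ^ r := by
  induction r generalizing k with
  | zero =>
    rw [dFold, pow_zero, pow_zero, one_apply]
    split_ifs <;> omega
  | succ r ih =>
    rw [dFold_succ_apply_prime_pow r hp]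
    calc ∑ i ∈ range (k + 1), dFold r (p ^ i)
      _ ≤ ∑ _i ∈ range (k + 1), (k + 1) ^ r := by
        gcongr with i hi
        exact (ih i).trans (Nat.pow_le_pow_left (mem_range.1 hi) r)
      _ = (k + 1) ^ (r + 1) := by rw [sum_const, card_range, smul_eq_mul, pow_succ']

theorem dFold_apply_one (r : ℕ) : dFold r 1 = 1 :=
  isMultiplicative_zeta.pow.map_one

theorem dFold_apply_prime (r : ℕ) {p : ℕ} (hp : p.Prime) : dFold r p = r := by
  induction r with
  | zero => rw [dFold, pow_zero, one_apply_ne hp.ne_one]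
  | succ r ih =>
    have h := dFold_succ_apply_prime_pow r hp 1
    simpa [sum_range_succ, ih, dFold_apply_one, add_comm] using h

theorem zeta_pow_ppow_apply (r q : ℕ) {n : ℕ} (hn : n ≠ 0) :
    ((ζ ^ r : ArithmeticFunction ℕ) : ArithmeticFunction ℝ).ppow q n = (dFold r n : ℝ) ^ q := by
  obtain rfl | hq := q.eq_zero_or_pos
  · simp [hn]
  · rw [ppow_apply hq, natCoe_apply, dFold]

theorem logSum_zeta_pow_ppow (r q : ℕ) (x : ℝ) :
    logSum (((ζ ^ r : ArithmeticFunction ℕ) : ArithmeticFunction ℝ).ppow q) x =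
      ∑ k ∈ Icc 1 ⌊x⌋₊, (dFold r k : ℝ) ^ q / k :=
  sum_congr rfl fun k hk ↦ by
    rw [zeta_pow_ppow_apply r q (Nat.one_le_iff_ne_zero.1 (mem_Icc.1 hk).1)]

theorem summable_add_one_pow_mul_geometric_of_abs_lt_one (D : ℕ) {q : ℝ} (hq : |q| < 1) :
    Summable fun k : ℕ ↦ ((k : ℝ) + 1) ^ D * q ^ k := by
  simp only [add_pow, one_pow, mul_one, sum_mul]
  refine summable_sum fun i _ ↦ ?_
  exact ((summable_pow_mul_geometric_of_norm_lt_one i hq).mul_left (D.choose i : ℝ)).congr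
    fun k ↦ by ring

theorem exists_abs_logSum_zeta_pow_ppow_sub_le {r : ℕ} (hr : r ≠ 0) (q : ℕ) :
    ∃ A, 0 < A ∧ ∃ C, 0 ≤ C ∧ ∀ x : ℝ, 2 ≤ x →
      |logSum (((ζ ^ r : ArithmeticFunction ℕ) : ArithmeticFunction ℝ).ppow q) x -
          A * Real.log x ^ (r ^ q)| ≤ C * Real.log x ^ (r ^ q - 1) := by
  have hmono : Monotone fun k : ℕ ↦ ((k : ℝ) + 1) ^ (r * q) := fun k l hkl ↦ by
    beta_reduce
    gcongr
  refine exists_abs_logSum_sub_mul_log_pow_le (pow_ne_zero q hr)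
    isMultiplicative_zeta.pow.natCast.ppow (fun n ↦ ?_) (fun p hp ↦ ?_)
    hmono (fun z hz0 hz1 ↦ ?_) fun p hp k ↦ ?_
  · obtain rfl | hn := eq_or_ne n 0
    · rw [ArithmeticFunction.map_zero]
    · rw [zeta_pow_ppow_apply r q hn]
      positivity
  · rw [zeta_pow_ppow_apply r q hp.ne_zero, dFold_apply_prime r hp, Nat.cast_pow]
  · exact summable_add_one_pow_mul_geometric_of_abs_lt_one _ (by rwa [abs_of_nonneg hz0])
  · rw [zeta_pow_ppow_apply r q (pow_ne_zero k hp.ne_zero), abs_of_nonneg (by positivity), pow_mul]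
    gcongr
    exact_mod_cast dFold_apply_prime_pow_le r hp k

end DivisorPowers

theorem dFold_sq_average_general (r q : ℕ) (hr : 1 ≤ r) :
    ∃ A : ℝ, 0 < A ∧ ∃ C : ℝ, ∀ T x : ℝ, 2 ≤ x → x ≤ T →
      |(∑ k ∈ Finset.Icc 1 ⌊x⌋₊, (dFold r k : ℝ) ^ q / k) - A * (Real.log x) ^ (r ^ q)|
        ≤ C * (Real.log T) ^ (r ^ q - 1) := by
  obtain ⟨A, hA, C, hC, hbound⟩ :=
    exists_abs_logSum_zeta_pow_ppow_sub_le (Nat.one_le_iff_ne_zero.1 hr) q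
  refine ⟨A, hA, C, fun T x hx hxT ↦ ?_⟩
  have hlogx : 0 ≤ Real.log x := Real.log_nonneg (by linarith)
  rw [← logSum_zeta_pow_ppow]
  refine (hbound x hx).trans ?_
  gcongr

theorem dFold_sq_average (r : ℕ) (hr : 1 ≤ r) :
    ∃ A : ℝ, 0 < A ∧ ∃ C : ℝ, ∀ T x : ℝ, 2 ≤ x → x ≤ T →
      |(∑ k ∈ Finset.Icc 1 ⌊x⌋₊, (dFold r k : ℝ) ^ 2 / k) - A * (Real.log x) ^ (r ^ 2)|
        ≤ C * (Real.log T) ^ (r ^ 2 - 1) :=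
  dFold_sq_average_general r 2 hr
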